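/- For every integer k ≥ 3, every proper induced subgraph of Z_k is isomorphic to an induced subgraph of J_k − z_g, where g = (k−1)(k+1). -/

import Mathlib

/-- The `k`-path power on `n` vertices (0-indexed: vertex `i : Fin n` represents
vertex `i+1`): distinct vertices are adjacent iff their indices differ by at most `k`. -/
def pathPower (k n : ℕ) : SimpleGraph (Fin n) :=
  SimpleGraph.fromRel (fun i j => |(i.val : ℤ) - (j.val : ℤ)| ≤ k)

/-- `G - x`: the induced subgraph of `G` on all vertices other than `x`. -/
def deleteVert {V : Type*} (G : SimpleGraph V) (x : V) : SimpleGraph {y : V // y ∈ {y : V | y ≠ x}} :=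
  G.induce {y : V | y ≠ x}

/-- The graph `Z_k`: the `k`-path power on `k(k+1)+2` vertices. -/
def Zgraph (k : ℕ) : SimpleGraph (Fin (k * (k + 1) + 2)) :=
  pathPower k (k * (k + 1) + 2)

/-- The graph `J_k`: the `k`-path power on `(2k-1)(k+1)+1` vertices. -/
def Jgraph (k : ℕ) : SimpleGraph (Fin ((2 * k - 1) * (k + 1) + 1)) :=
  pathPower k ((2 * k - 1) * (k + 1) + 1)

/-!
Shifting and reversing the indices of a path power preserve adjacency, so a path power can be
placed inside a longer one in either orientation. Given a vertex `j` missing from `s`, place `Z_k`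
inside `J_k` so that `j` lands on `z_g`; the remaining vertices then avoid `z_g`. If the index of
`j` is at most `g`, a shift does this. Otherwise reverse `Z_k` first: for `k ≥ 3` the index `g` lies
in the second half of `Z_k`, so the reversal brings `j` to an index at most `g`. The length of `J_k`
is exactly what the largest shift needs.
-/

theorem pathPower_adj {k n : ℕ} {i j : Fin n} :
    (pathPower k n).Adj i j ↔ i ≠ j ∧ |(i.val : ℤ) - (j.val : ℤ)| ≤ k := by
  simp only [pathPower, SimpleGraph.fromRel_adj, abs_sub_comm (j.val : ℤ), or_self]

/-- The translation `i ↦ i + d` of indices, as an embedding of path powers. -/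
def pathPowerShift (k d : ℕ) {n m : ℕ} (h : n + d ≤ m) : pathPower k n ↪g pathPower k m where
  toEmbedding := (Fin.addNatEmb d).trans (Fin.castLEEmb h)
  map_rel_iff' := by simp [pathPower_adj]

/-- The reversal `i ↦ n - 1 - i` of (0-based) indices, as an automorphism of the path power. -/
def pathPowerRev (k n : ℕ) : pathPower k n ≃g pathPower k n where
  toEquiv := Fin.revPerm
  map_rel_iff' {i j} := by
    have rev_sub_rev : ((i.rev : ℕ) : ℤ) - (j.rev : ℕ) = (j : ℕ) - (i : ℕ) := by
      simp only [Fin.val_rev]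
      omega
    simp only [pathPower_adj, Fin.revPerm_apply, rev_sub_rev, abs_sub_comm (j.val : ℤ), ne_eq,
      Fin.rev_inj]

theorem exists_pathPower_embedding_apply_eq_of_le (k : ℕ) {n m : ℕ} {j : Fin n} {p : Fin m}
    (hnm : n + p ≤ m) (hjp : (j : ℕ) ≤ p) :
    ∃ e : pathPower k n ↪g pathPower k m, e j = p :=
  ⟨pathPowerShift k (p - j) (by omega), Fin.ext (Nat.add_sub_of_le hjp)⟩

theorem exists_pathPower_embedding_apply_eq (k : ℕ) {n m : ℕ} (j : Fin n) {p : Fin m}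
    (hnm : n + p ≤ m) (hnp : n ≤ 2 * (p + 1)) :
    ∃ e : pathPower k n ↪g pathPower k m, e j = p := by
  rcases le_or_gt (j : ℕ) p with hjp | hpj
  · exact exists_pathPower_embedding_apply_eq_of_le k hnm hjp
  · have rev_le : (j.rev : ℕ) ≤ p := by
      rw [Fin.val_rev]
      omega
    obtain ⟨e, he⟩ := exists_pathPower_embedding_apply_eq_of_le k hnm rev_le
    exact ⟨e.comp (pathPowerRev k n).toEmbedding, he⟩

/-- The restriction of an embedding `G ↪g H` to a vertex set missing `x`, with the image of `x`
deleted from the codomain. -/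
def induceEmbeddingDeleteVert {V W : Type*} {G : SimpleGraph V} {H : SimpleGraph W} (e : G ↪g H)
    {s : Set V} {x : V} (hx : x ∉ s) : G.induce s ↪g deleteVert H (e x) where
  toFun v := ⟨e v, e.injective.ne (ne_of_mem_of_not_mem v.2 hx)⟩
  inj' _ _ h := Subtype.ext (e.injective (congrArg Subtype.val h))
  map_rel_iff' := e.map_adj_iff

theorem nonempty_pathPower_induce_embedding_deleteVert (k : ℕ) {n m : ℕ} {p : Fin m}
    (hnm : n + p ≤ m) (hnp : n ≤ 2 * (p + 1)) {s : Set (Fin n)} (hs : s ≠ Set.univ) :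
    Nonempty ((pathPower k n).induce s ↪g deleteVert (pathPower k m) p) := by
  obtain ⟨j, hj⟩ := (Set.ne_univ_iff_exists_notMem s).1 hs
  obtain ⟨e, rfl⟩ := exists_pathPower_embedding_apply_eq k j hnm hnp
  exact ⟨induceEmbeddingDeleteVert e hj⟩

/-- For `k ≥ 3`, every proper induced subgraph of `Z_k` (induced on a proper subset `s`
of its vertex set) is isomorphic to an induced subgraph of `J_k - z_g`, where
`g = (k-1)(k+1)` (`zg` is the vertex of 0-based index `g - 1`). -/
theorem proper_induced_subgraph_Zk_embeds (k : ℕ) (hk : 3 ≤ k)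
    (zg : Fin ((2 * k - 1) * (k + 1) + 1)) (hzg : (zg : ℕ) = (k - 1) * (k + 1) - 1)
    (s : Set (Fin (k * (k + 1) + 2))) (hs : s ≠ Set.univ) :
    Nonempty ((Zgraph k).induce s ↪g deleteVert (Jgraph k) zg) := by
  have hg : (zg : ℕ) + 2 = k ^ 2 := by
    rw [mul_comm (k - 1), ← Nat.sq_sub_sq, one_pow] at hzg
    have : 3 ^ 2 ≤ k ^ 2 := Nat.pow_le_pow_left hk 2
    omega
  have card_J : (2 * k - 1) * (k + 1) + 1 = 2 * k ^ 2 + k := by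
    zify [show 1 ≤ 2 * k by omega]
    ring
  apply nonempty_pathPower_induce_embedding_deleteVert k _ _ hs
  · linarith
  · nlinarith
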